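/- If every word in W ∪ W_* has an embedding with respect to C (Cᵀ.mulVec w⃗_i = PMI_i), then ∑_{i∈W_*} w⃗_i = (∑_{i∈W} w⃗_i) + C†.mulVec( ρ^{W,W_*} + σ^W − σ^{W_*} − (τ^W − τ^{W_*})·𝟙 ). (Paper's Theorem 2: Generalised Paraphrase.) -/

import Mathlib

open MeasureTheory Real Finset Matrix

namespace AnalogiesExplained

variable {Ω : Type*}

/-- Conditional probability `p(B ∣ A) = μ(A ∩ B) / μ(A)` (as a real number). -/
noncomputable def condP [MeasurableSpace Ω] (μ : Measure Ω) (A B : Set Ω) : ℝ :=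
  (μ (A ∩ B)).toReal / (μ A).toReal

/-- Pointwise mutual information `PMI(A, B) = log (μ(A ∩ B) / (μ(A)·μ(B)))`. -/
noncomputable def PMI [MeasurableSpace Ω] (μ : Measure Ω) (A B : Set Ω) : ℝ :=
  Real.log ((μ (A ∩ B)).toReal / ((μ A).toReal * (μ B).toReal))

/-- The joint event of a finite word set: `A_W = ⋂ i ∈ W, A i`. -/
def jointEvent {ι : Type*} (A : ι → Set Ω) (W : Finset ι) : Set Ω :=
  ⋂ i ∈ W, A i

/-- Paraphrase error `ρ^{W,W*}_j = log (p(B_j ∣ A_{W*}) / p(B_j ∣ A_W))`. -/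
noncomputable def rho [MeasurableSpace Ω] (μ : Measure Ω) (AW AWstar B : Set Ω) : ℝ :=
  Real.log (condP μ AWstar B / condP μ AW B)

/-- Conditional-dependence error `σ^W_j = log (p(A_W ∣ B_j) / ∏_{i ∈ W} p(A_i ∣ B_j))`. -/
noncomputable def sigma [MeasurableSpace Ω] {ι : Type*} (μ : Measure Ω) (A : ι → Set Ω)
    (W : Finset ι) (B : Set Ω) : ℝ :=
  Real.log (condP μ B (jointEvent A W) / ∏ i ∈ W, condP μ B (A i))

/-- Marginal-dependence error `τ^W = log (μ(A_W) / ∏_{i ∈ W} μ(A_i))`. -/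
noncomputable def tau [MeasurableSpace Ω] {ι : Type*} (μ : Measure Ω) (A : ι → Set Ω)
    (W : Finset ι) : ℝ :=
  Real.log ((μ (jointEvent A W)).toReal / ∏ i ∈ W, (μ (A i)).toReal)

/-! Pointwise mutual information can be read in both directions,
`exp PMI(A, B) = p(B ∣ A) / μ(B) = p(A ∣ B) / μ(A)`. The first reading shows that `ρ` is the
difference of the `PMI`s of the two joint events with `B_j`, the second that `σ^W − τ^W` is the
failure of `PMI` to be additive over `W`. The total error is therefore
`∑_{i∈W_*} PMI_i − ∑_{i∈W} PMI_i`, which is `Cᵀ` applied to the difference of the embedding sums,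
and `C†` is a left inverse of `Cᵀ`. -/

theorem inv_mul_mulVec_mulVec {m k R : Type*} [Fintype m] [DecidableEq m] [Fintype k]
    [CommRing R] {C : Matrix m k R} {D : Matrix k m R} (h : IsUnit (C * D)) (v : m → R) :
    ((C * D)⁻¹ * C) *ᵥ (D *ᵥ v) = v := by
  rw [mulVec_mulVec, Matrix.mul_assoc, nonsing_inv_mul _ ((isUnit_iff_isUnit_det _).mp h),
    one_mulVec]

theorem jointEvent_subset {ι : Type*} (A : ι → Set Ω) {W : Finset ι} {i : ι} (hi : i ∈ W) :
    jointEvent A W ⊆ A i :=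
  Set.biInter_subset_of_mem hi

section PMI

variable [MeasurableSpace Ω] {μ : Measure Ω}

theorem PMI_comm (A B : Set Ω) : PMI μ A B = PMI μ B A := by
  rw [PMI, PMI, Set.inter_comm, mul_comm]

variable [IsFiniteMeasure μ] {E E' B : Set Ω}

theorem toReal_measure_ne_zero_of_subset (hEB : E ⊆ B) (hE : μ E ≠ 0) : (μ B).toReal ≠ 0 :=
  (measureReal_ne_zero_iff (measure_ne_top μ B)).mpr (mt (measure_mono_null hEB) hE)

theorem condP_ne_zero (h : μ (E ∩ B) ≠ 0) : condP μ E B ≠ 0 :=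
  div_ne_zero (toReal_measure_ne_zero_of_subset subset_rfl h)
    (toReal_measure_ne_zero_of_subset Set.inter_subset_left h)

theorem PMI_eq_log_condP_sub_log (h : μ (E ∩ B) ≠ 0) :
    PMI μ E B = Real.log (condP μ E B) - Real.log (μ B).toReal := by
  rw [← Real.log_div (condP_ne_zero h)
    (toReal_measure_ne_zero_of_subset Set.inter_subset_right h), condP, div_div, PMI]

theorem rho_eq_PMI_sub_PMI (h : μ (E ∩ B) ≠ 0) (h' : μ (E' ∩ B) ≠ 0) :
    rho μ E E' B = PMI μ E' B - PMI μ E B := by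
  rw [rho, Real.log_div (condP_ne_zero h') (condP_ne_zero h), PMI_eq_log_condP_sub_log h,
    PMI_eq_log_condP_sub_log h', sub_sub_sub_cancel_right]

variable {ι : Type*} {A : ι → Set Ω} {W W' : Finset ι}

theorem sigma_eq_log_sub_sum (h : μ (jointEvent A W ∩ B) ≠ 0) :
    sigma μ A W B =
      Real.log (condP μ B (jointEvent A W)) - ∑ i ∈ W, Real.log (condP μ B (A i)) := by
  rw [Set.inter_comm] at h
  have hA : ∀ i ∈ W, condP μ B (A i) ≠ 0 := fun i hi =>
    condP_ne_zero
      (mt (measure_mono_null (Set.inter_subset_inter_right B (jointEvent_subset A hi))) h)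
  rw [sigma, Real.log_div (condP_ne_zero h) (prod_ne_zero_iff.mpr hA), Real.log_prod hA]

theorem tau_eq_log_sub_sum (h : μ (jointEvent A W) ≠ 0) :
    tau μ A W = Real.log (μ (jointEvent A W)).toReal - ∑ i ∈ W, Real.log (μ (A i)).toReal := by
  have hA : ∀ i ∈ W, (μ (A i)).toReal ≠ 0 := fun i hi =>
    toReal_measure_ne_zero_of_subset (jointEvent_subset A hi) h
  rw [tau, Real.log_div (toReal_measure_ne_zero_of_subset subset_rfl h)
    (prod_ne_zero_iff.mpr hA), Real.log_prod hA]

theorem sigma_sub_tau_eq_PMI_sub_sum (h : μ (jointEvent A W ∩ B) ≠ 0) :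
    sigma μ A W B - tau μ A W = PMI μ (jointEvent A W) B - ∑ i ∈ W, PMI μ (A i) B := by
  have PMI_eq {E : Set Ω} (hE : jointEvent A W ⊆ E) :
      PMI μ E B = Real.log (condP μ B E) - Real.log (μ E).toReal := by
    rw [PMI_comm, PMI_eq_log_condP_sub_log]
    rw [Set.inter_comm]
    exact mt (measure_mono_null (Set.inter_subset_inter_left B hE)) h
  rw [sigma_eq_log_sub_sum h, tau_eq_log_sub_sum (mt (measure_inter_null_of_null_left B) h),
    PMI_eq subset_rfl, sum_congr rfl fun i hi => PMI_eq (jointEvent_subset A hi),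
    sum_sub_distrib, sub_sub_sub_comm]

theorem rho_add_sigma_sub_tau_eq_sum_PMI_sub_sum_PMI
    (h : μ (jointEvent A W ∩ B) ≠ 0) (h' : μ (jointEvent A W' ∩ B) ≠ 0) :
    rho μ (jointEvent A W) (jointEvent A W') B + sigma μ A W B - sigma μ A W' B
        - (tau μ A W - tau μ A W') =
      ∑ i ∈ W', PMI μ (A i) B - ∑ i ∈ W, PMI μ (A i) B := by
  linear_combination rho_eq_PMI_sub_PMI h h' + sigma_sub_tau_eq_PMI_sub_sum h
    - sigma_sub_tau_eq_PMI_sub_sum h'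

end PMI

theorem generalised_paraphrase_embedding_general
    [MeasurableSpace Ω] (μ : Measure Ω) [IsFiniteMeasure μ]
    {ι κ δ : Type*} [Fintype κ] [Fintype δ] [DecidableEq δ]
    (A : ι → Set Ω) (B : κ → Set Ω) (W Wstar : Finset ι)
    (hAWB : ∀ j, μ (jointEvent A W ∩ B j) ≠ 0)
    (hAWsB : ∀ j, μ (jointEvent A Wstar ∩ B j) ≠ 0)
    (C : Matrix δ κ ℝ) (hC : IsUnit (C * Cᵀ)) (wv : ι → δ → ℝ)
    (hwv : ∀ i, i ∈ W ∨ i ∈ Wstar → Cᵀ *ᵥ wv i = fun j => PMI μ (A i) (B j)) :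
    ∑ i ∈ Wstar, wv i = ∑ i ∈ W, wv i
      + ((C * Cᵀ)⁻¹ * C) *ᵥ
          (fun j => rho μ (jointEvent A W) (jointEvent A Wstar) (B j)
            + sigma μ A W (B j) - sigma μ A Wstar (B j)
            - (tau μ A W - tau μ A Wstar)) := by
  have transpose_mulVec_sub : Cᵀ *ᵥ (∑ i ∈ Wstar, wv i - ∑ i ∈ W, wv i) =
      fun j => ∑ i ∈ Wstar, PMI μ (A i) (B j) - ∑ i ∈ W, PMI μ (A i) (B j) := by
    rw [mulVec_sub, mulVec_sum, mulVec_sum, sum_congr rfl fun i hi => hwv i (.inr hi),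
      sum_congr rfl fun i hi => hwv i (.inl hi)]
    ext j
    simp only [Pi.sub_apply, Finset.sum_apply]
  simp_rw [rho_add_sigma_sub_tau_eq_sum_PMI_sub_sum_PMI (hAWB _) (hAWsB _)]
  rw [← transpose_mulVec_sub, inv_mul_mulVec_mulVec hC, add_sub_cancel]

/-- **Theorem 2 (Generalised Paraphrase).** If every word in `W ∪ W_*` has an embedding w.r.t.
`C`, then `∑_{i∈W_*} w⃗_i = (∑_{i∈W} w⃗_i) + C†(ρ^{W,W_*} + σ^W − σ^{W_*} − (τ^W − τ^{W_*})·𝟙)`. -/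
theorem generalised_paraphrase_embedding
    [MeasurableSpace Ω] (μ : Measure Ω) [IsProbabilityMeasure μ]
    {ι : Type*} [DecidableEq ι] (A : ι → Set Ω) {n : ℕ} (B : Fin n → Set Ω)
    (W Wstar : Finset ι)
    (hmA : ∀ i, MeasurableSet (A i)) (hmB : ∀ j, MeasurableSet (B j))
    (hA : ∀ i ∈ W ∪ Wstar, 0 < (μ (A i)).toReal)
    (hB : ∀ j, 0 < (μ (B j)).toReal)
    (hAW : 0 < (μ (jointEvent A W)).toReal)
    (hAWs : 0 < (μ (jointEvent A Wstar)).toReal)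
    (hAB : ∀ i ∈ W ∪ Wstar, ∀ j, 0 < (μ (A i ∩ B j)).toReal)
    (hAWB : ∀ j, 0 < (μ (jointEvent A W ∩ B j)).toReal)
    (hAWsB : ∀ j, 0 < (μ (jointEvent A Wstar ∩ B j)).toReal)
    {d : ℕ} (C : Matrix (Fin d) (Fin n) ℝ)
    (hC : IsUnit (C * C.transpose))
    (wv : ι → Fin d → ℝ)
    (hwi : ∀ i ∈ W ∪ Wstar, C.transpose.mulVec (wv i) = fun j => PMI μ (A i) (B j)) :
    (∑ i ∈ Wstar, wv i) = (∑ i ∈ W, wv i)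
      + ((C * C.transpose)⁻¹ * C).mulVec
          (fun j => rho μ (jointEvent A W) (jointEvent A Wstar) (B j)
            + sigma μ A W (B j) - sigma μ A Wstar (B j)
            - (tau μ A W - tau μ A Wstar)) :=
  generalised_paraphrase_embedding_general μ A B W Wstar
    (fun j => (ENNReal.toReal_pos_iff.mp (hAWB j)).1.ne')
    (fun j => (ENNReal.toReal_pos_iff.mp (hAWsB j)).1.ne')
    C hC wv fun i hi => hwi i (mem_union.mpr hi)

end AnalogiesExplained
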